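/- arXiv:2108.04756 — 2 statements merged into one kernel-verified Lean document; each statement's English description precedes it below -/
import Mathlib

section
/- Let n ≥ 2 and let a₁,...,aₙ be positive integers with gcd(a₁,...,aₙ) = 1, and let M = lcm(a₁,...,aₙ). Then there exist rational numbers c₀, c₁, ..., c_{n−1} with c₀ = 1/(a₁a₂⋯aₙ·(n−1)!) and c_{n−1} = 1 such that for every nonnegative integer b divisible by M, P(b) = c₀·b^{n−1} + c₁·b^{n−2} + ⋯ + c_{n−2}·b + c_{n−1}. That is, restricted to multiples of M, P(b) is a polynomial of degree n−1 in b with leading coefficient 1/(a₁a₂⋯aₙ·(n−1)!) and free coefficient 1. -/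
/-!
Write `b = M * k` and put `m i = M / a i`. Dividing each `x i` by `m i`, say
`x i = r i + m i * y i` with `0 ≤ r i < m i`, turns `∑ a i * x i = M * k` into
`∑ a i * r i + M * ∑ y i = M * k`. So only the residue vectors `r` with `M ∣ ∑ a i * r i`
contribute. For such an `r`, with `s = (∑ a i * r i) / M`, the number of `y` with `∑ y i = k - s`
is `(k - s + n - 1).choose (n - 1)`. Since `a i * r i < M` for all `i`, we have `s ≤ n - 1`; hence
this binomial coefficient, read as a polynomial in `k`, also gives the right value `0` when
`0 ≤ k < s` (`card_quotients`). Therefore `P (M * k)` is exactly a polynomial in `k` for all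
`k ≥ 0`; its constant coefficient is `P 0 = 1`.

Each contributing `r` adds `1 / (n - 1)!` to the coefficient of `k ^ (n - 1)`. The contributing `r`
form the kernel of the homomorphism `∏ ℤ/m i → ℤ/M`, `r ↦ ∑ a i * r i`, which is surjective because
the `a i` are coprime, so there are `(∏ m i) / M = M ^ (n - 1) / ∏ a i` of them
(`mul_card_residues`). Replacing `k` by `b / M` gives the leading coefficient.
-/

open Finset Polynomial

/-- Stars and bars. -/
lemma card_sum_eq (d j : ℕ) :
    Nat.card {y : Fin (d + 1) → ℕ // ∑ i, y i = j} = (j + d).choose d := by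
  have e : {y : Fin (d + 1) → ℕ // ∑ i, y i = j} ≃ Sym (Fin (d + 1)) j := by
    refine (Equiv.subtypeEquiv Finsupp.equivFunOnFinite.symm ?_).trans
      (Sym.equivNatSum (Fin (d + 1)) j).symm
    intro y
    simp [Finsupp.sum_fintype]
  rw [Nat.card_congr e, Nat.card_eq_fintype_card, Sym.card_sym_eq_choose, Fintype.card_fin,
    show d + 1 + j - 1 = j + d by omega, Nat.choose_symm_add]

/-- Holds also for `k < s`, where both sides vanish; this makes the count polynomial in `k` for every
`k ≥ 0`. -/
lemma card_sum_add_eq (d k s : ℕ) (hs : s ≤ d) :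
    Nat.card {y : Fin (d + 1) → ℕ // s + ∑ i, y i = k} = (k + (d - s)).choose d := by
  by_cases h : s ≤ k
  · rw [show k + (d - s) = (k - s) + d by omega, ← card_sum_eq]
    exact Nat.card_congr (Equiv.subtypeEquivRight fun y => by omega)
  · rw [Nat.choose_eq_zero_of_lt (by omega), Nat.card_eq_zero]
    exact Or.inl ⟨fun y => by have := y.2; omega⟩

/-- The decomposition `x i = r i + m i * y i` into residues and quotients. -/
noncomputable def residueQuotientEquiv {n : ℕ} (m : Fin n → ℕ) (hm : ∀ i, 0 < m i) :
    (Fin n → ℕ) ≃ ((i : Fin n) → ZMod (m i)) × (Fin n → ℕ) where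
  toFun x := (fun i => (x i : ZMod (m i)), fun i => x i / m i)
  invFun p := fun i => (p.1 i).val + m i * p.2 i
  left_inv x := by
    funext i
    simp [ZMod.val_natCast, Nat.mod_add_div]
  right_inv p := by
    refine Prod.ext (funext fun i => ?_) (funext fun i => ?_)
    · have : NeZero (m i) := ⟨(hm i).ne'⟩
      simp
    · have : NeZero (m i) := ⟨(hm i).ne'⟩
      simp [Nat.add_mul_div_left _ _ (hm i), Nat.div_eq_of_lt (ZMod.val_lt (p.1 i))]

/-- The homomorphism `ℤ/k → ℤ/M` induced by multiplication by `a`, where `a * k = M`. -/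
noncomputable def mulHom (a k M : ℕ) (h : a * k = M) : ZMod k →+ ZMod M :=
  ZMod.lift k ⟨(AddMonoidHom.mulLeft (a : ZMod M)).comp (Int.castAddHom (ZMod M)), by
    have : ((a * k : ℕ) : ZMod M) = 0 := by rw [h]; simp
    simpa using this⟩

lemma mulHom_apply (a k M : ℕ) (hk : 0 < k) (h : a * k = M) (r : ZMod k) :
    mulHom a k M h r = ((a * r.val : ℕ) : ZMod M) := by
  have : NeZero k := ⟨hk.ne'⟩
  conv_lhs => rw [← ZMod.natCast_zmod_val r, ← Int.cast_natCast]
  rw [mulHom, ZMod.lift_coe]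
  simp

/-- A subgroup of `ℤ/M` containing a coprime family is the whole group. -/
lemma eq_top_of_coprime_mem {n M : ℕ} (a : Fin n → ℕ) (hgcd : univ.gcd a = 1)
    (H : AddSubgroup (ZMod M)) (h : ∀ i, (a i : ZMod M) ∈ H) : H = ⊤ := by
  obtain ⟨g, hg⟩ := Finset.gcd_eq_sum_mul univ (fun i => (a i : ℤ))
  have h1 : (univ.gcd fun i => (a i : ℤ)) ∣ 1 := by
    rw [← Int.natAbs_dvd_natAbs, Int.natAbs_one, ← hgcd]
    refine Finset.dvd_gcd fun i _ => ?_
    rw [← Int.natAbs_natCast (a i), Int.natAbs_dvd_natAbs]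
    exact Finset.gcd_dvd (f := fun i => (a i : ℤ)) (mem_univ i)
  obtain ⟨u, hu⟩ := h1
  have h2 : (1 : ZMod M) ∈ H := by
    have : (1 : ZMod M) = u • ∑ i, g i • (a i : ZMod M) := by
      have := congrArg (Int.cast : ℤ → ZMod M) hu
      rw [hg] at this
      push_cast at this
      rw [this, zsmul_eq_mul, mul_comm]
      simp [mul_comm]
    rw [this]
    exact H.zsmul_mem (H.sum_mem fun i _ => H.zsmul_mem (h i) _) _
  refine (AddSubgroup.eq_top_iff' H).2 fun x => ?_
  obtain ⟨z, rfl⟩ := ZMod.intCast_surjective x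
  simpa using H.zsmul_mem h2 z

/-- The residue vectors counted here are the kernel of a surjection `∏ ℤ/m i → ℤ/M`. -/
lemma mul_card_residues {n M : ℕ} (a m : Fin n → ℕ) (hgcd : univ.gcd a = 1) (hM : 0 < M)
    (hm : ∀ i, 0 < m i) (ham : ∀ i, a i * m i = M) :
    M * Nat.card {r : (i : Fin n) → ZMod (m i) // M ∣ ∑ i, a i * (r i).val} = ∏ i, m i := by
  have : NeZero M := ⟨hM.ne'⟩
  let φ : ((i : Fin n) → ZMod (m i)) →+ ZMod M :=
    ∑ i, (mulHom (a i) (m i) M (ham i)).comp (Pi.evalAddMonoidHom (fun i => ZMod (m i)) i)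
  have hφ : ∀ r, φ r = ((∑ i, a i * (r i).val : ℕ) : ZMod M) := fun r => by
    simp only [φ, AddMonoidHom.finsetSum_apply, AddMonoidHom.comp_apply,
      Pi.evalAddMonoidHom_apply, Nat.cast_sum]
    exact sum_congr rfl fun i _ => mulHom_apply _ _ _ (hm i) _ _
  have hrange : φ.range = ⊤ := by
    refine eq_top_of_coprime_mem a hgcd _ fun i => ⟨Pi.single i 1, ?_⟩
    simp only [φ, AddMonoidHom.finsetSum_apply, AddMonoidHom.comp_apply,
      Pi.evalAddMonoidHom_apply]
    rw [Finset.sum_eq_single i]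
    · rw [Pi.single_eq_same, mulHom, ← Int.cast_one, ZMod.lift_coe]
      simp
    · intro j _ hj
      simp [Pi.single_eq_of_ne hj]
    · simp
  have key := φ.ker.card_mul_index
  rw [AddSubgroup.index_ker, hrange, AddSubgroup.card_top, Nat.card_zmod, Nat.card_pi] at key
  simp only [Nat.card_zmod] at key
  rw [← key, mul_comm]
  congr 1
  refine Nat.card_congr (Equiv.subtypeEquivRight fun r => ?_)
  rw [AddMonoidHom.mem_ker, hφ, ZMod.natCast_eq_zero_iff]

/-- The number of quotient vectors `y` completing a fixed residue vector `r`. As `s ≤ d`, the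
truncated subtraction `d - s` is exact. -/
lemma card_quotients {d M : ℕ} (a m : Fin (d + 1) → ℕ) (hM : 0 < M) (ha : ∀ i, 0 < a i)
    (hm : ∀ i, 0 < m i) (ham : ∀ i, a i * m i = M) (r : (i : Fin (d + 1)) → ZMod (m i))
    (hr : M ∣ ∑ i, a i * (r i).val) (k : ℕ) :
    Nat.card {y : Fin (d + 1) → ℕ // ∑ i, a i * (r i).val + M * ∑ i, y i = M * k} =
      (k + (d - (∑ i, a i * (r i).val) / M)).choose d := by
  obtain ⟨s, hs⟩ := hr
  have hlt : ∑ i, a i * (r i).val < ∑ _i : Fin (d + 1), M := by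
    refine sum_lt_sum_of_nonempty univ_nonempty fun i _ => ?_
    have : NeZero (m i) := ⟨(hm i).ne'⟩
    rw [← ham i]
    exact Nat.mul_lt_mul_of_pos_left (ZMod.val_lt _) (ha i)
  rw [hs, sum_const, card_univ, Fintype.card_fin, smul_eq_mul, mul_comm,
    Nat.mul_lt_mul_right hM] at hlt
  rw [hs, Nat.mul_div_cancel_left _ hM, ← card_sum_add_eq d k s (by omega)]
  refine Nat.card_congr (Equiv.subtypeEquivRight fun y => ?_)
  rw [← mul_add]
  exact Nat.mul_right_inj hM.ne'

lemma card_solutions {d M : ℕ} (a m : Fin (d + 1) → ℕ) (hM : 0 < M) (ha : ∀ i, 0 < a i)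
    (hm : ∀ i, 0 < m i) (ham : ∀ i, a i * m i = M) [∀ i, NeZero (m i)] (k : ℕ) :
    Nat.card {x : Fin (d + 1) → ℕ // ∑ i, a i * x i = M * k} =
      ∑ r : (i : Fin (d + 1)) → ZMod (m i) with M ∣ ∑ i, a i * (r i).val,
        (k + (d - (∑ i, a i * (r i).val) / M)).choose d := by
  let p : ((i : Fin (d + 1)) → ZMod (m i)) → (Fin (d + 1) → ℕ) → Prop :=
    fun r y => ∑ i, a i * (r i).val + M * ∑ i, y i = M * k
  have e : {x : Fin (d + 1) → ℕ // ∑ i, a i * x i = M * k} ≃ Σ r, {y // p r y} := by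
    refine Equiv.trans (Equiv.symm ?_) (Equiv.subtypeProdEquivSigmaSubtype p)
    refine Equiv.subtypeEquiv (residueQuotientEquiv m hm).symm fun q => ?_
    have : ∑ i, a i * ((residueQuotientEquiv m hm).symm q) i =
        ∑ i, a i * (q.1 i).val + M * ∑ i, q.2 i := by
      rw [mul_sum, ← sum_add_distrib]
      refine sum_congr rfl fun i _ => ?_
      change a i * ((q.1 i).val + m i * q.2 i) = _
      rw [← ham i]
      ring
    rw [this]
  have hfin : ∀ r, Finite {y // p r y} := fun r => by
    refine Set.Finite.to_subtype (Set.Finite.subset (Set.finite_Iic (fun _ => k)) fun y hy i => ?_)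
    have h1 : y i ≤ ∑ i, y i := single_le_sum (fun _ _ => Nat.zero_le _) (mem_univ i)
    have h2 : M * ∑ i, y i ≤ M * k := by
      have : ∑ i, a i * (r i).val + M * ∑ i, y i = M * k := hy
      omega
    exact h1.trans (Nat.le_of_mul_le_mul_left h2 hM)
  rw [Nat.card_congr e, Nat.card_sigma, sum_filter]
  refine sum_congr rfl fun r _ => ?_
  split_ifs with h
  · exact card_quotients a m hM ha hm ham r h k
  · rw [Nat.card_eq_zero]
    refine Or.inl ⟨fun y => h ?_⟩
    have : ∑ i, a i * (r i).val + M * ∑ i, y.1 i = M * k := y.2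
    exact (Nat.dvd_add_left (dvd_mul_right _ _)).1 (this ▸ dvd_mul_right M k)

/-- The polynomial in `k` whose value at a natural number `k` is `(k + t).choose d`. -/
noncomputable def shiftedChoose (d t : ℕ) : ℚ[X] :=
  C (1 / (d.factorial : ℚ)) * (descPochhammer ℚ d).comp (X + C (t : ℚ))

lemma shiftedChoose_eval (d t k : ℕ) :
    (shiftedChoose d t).eval (k : ℚ) = ((k + t).choose d : ℚ) := by
  have h : (d.factorial : ℚ) ≠ 0 := by positivity
  simp only [shiftedChoose, eval_mul, eval_C, eval_comp, eval_add, eval_X]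
  rw [← Nat.cast_add, descPochhammer_eval_eq_descFactorial,
    Nat.descFactorial_eq_factorial_mul_choose]
  push_cast
  field_simp

lemma shiftedChoose_natDegree_le (d t : ℕ) : (shiftedChoose d t).natDegree ≤ d := by
  refine (natDegree_C_mul_le _ _).trans ?_
  rw [natDegree_comp, descPochhammer_natDegree, natDegree_X_add_C, mul_one]

lemma shiftedChoose_coeff (d t : ℕ) : (shiftedChoose d t).coeff d = 1 / (d.factorial : ℚ) := by
  have h : ((descPochhammer ℚ d).comp (X + C (t : ℚ))).Monic :=
    (monic_descPochhammer ℚ d).comp_X_add_C _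
  have h2 : ((descPochhammer ℚ d).comp (X + C (t : ℚ))).natDegree = d := by
    rw [natDegree_comp, descPochhammer_natDegree, natDegree_X_add_C, mul_one]
  have h3 := h.coeff_natDegree
  rw [h2] at h3
  rw [shiftedChoose, coeff_C_mul, h3, mul_one]


/-- Proposition 3.2: if `gcd(a₁,…,aₙ) = 1` then, restricted to multiples
of `M = lcm(a₁,…,aₙ)`, `P(b)` is a polynomial of degree `n−1` in `b` with leading
coefficient `1/(a₁⋯aₙ (n−1)!)` and free coefficient `1`. -/
theorem stmt_6 (n : ℕ) (hn : 2 ≤ n) (a : Fin n → ℕ)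
    (ha : ∀ i, 0 < a i) (hgcd : Finset.univ.gcd a = 1)
    (M : ℕ) (hM : M = Finset.univ.lcm a)
    (P : ℤ → ℕ)
    (hP : ∀ e : ℤ, P e = Nat.card {x : Fin n → ℕ // ∑ i, (a i : ℤ) * x i = e}) :
    ∃ c : ℕ → ℚ,
      c 0 = 1 / ((∏ i, (a i : ℚ)) * (Nat.factorial (n - 1) : ℚ)) ∧
      c (n - 1) = 1 ∧
      ∀ b : ℕ, M ∣ b →
        (P (b : ℤ) : ℚ) = ∑ i ∈ Finset.range n, c i * (b : ℚ) ^ (n - 1 - i) := by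
  obtain ⟨d, rfl⟩ : ∃ d, n = d + 1 := ⟨n - 1, by omega⟩
  rw [Nat.add_sub_cancel]
  have hdvd : ∀ i, a i ∣ M := fun i => hM ▸ Finset.dvd_lcm (mem_univ i)
  have hMpos : 0 < M := by
    rw [Nat.pos_iff_ne_zero, hM, Ne, Finset.lcm_eq_zero_iff]
    rintro ⟨i, -, hi⟩
    exact (ha i).ne' hi
  choose m ham using hdvd
  replace ham : ∀ i, a i * m i = M := fun i => (ham i).symm
  have hm : ∀ i, 0 < m i := fun i => Nat.pos_of_mul_pos_left (by rw [ham i]; exact hMpos)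
  have hne : ∀ i, NeZero (m i) := fun i => ⟨(hm i).ne'⟩
  let R : Finset ((i : Fin (d + 1)) → ZMod (m i)) :=
    univ.filter fun r => M ∣ ∑ i, a i * (r i).val
  let Q : ℚ[X] := ∑ r ∈ R, shiftedChoose d (d - (∑ i, a i * (r i).val) / M)
  have hPQ : ∀ k : ℕ, (P ((M * k : ℕ) : ℤ) : ℚ) = Q.eval (k : ℚ) := fun k => by
    have h : P ((M * k : ℕ) : ℤ) = Nat.card {x : Fin (d + 1) → ℕ // ∑ i, a i * x i = M * k} := by
      rw [hP]
      exact Nat.card_congr (Equiv.subtypeEquivRight fun x => by norm_cast)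
    rw [h, card_solutions a m hMpos ha hm ham, eval_finsetSum, Nat.cast_sum]
    exact sum_congr rfl fun r _ => (shiftedChoose_eval _ _ _).symm
  have hQdeg : Q.natDegree < d + 1 :=
    Nat.lt_succ_of_le (natDegree_sum_le_of_forall_le _ _ fun r _ => shiftedChoose_natDegree_le _ _)
  have hR : (M : ℚ) * (R.card : ℚ) = ∏ i, (m i : ℚ) := by
    have := mul_card_residues a m hgcd hMpos hm ham
    rw [Nat.card_eq_fintype_card, Fintype.card_subtype] at this
    exact_mod_cast this
  have hprod : (∏ i, (a i : ℚ)) * ∏ i, (m i : ℚ) = (M : ℚ) ^ (d + 1) := by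
    rw [← prod_mul_distrib, prod_congr rfl fun i _ => show (a i : ℚ) * m i = M by
      exact_mod_cast ham i]
    simp
  have hM0 : (M : ℚ) ≠ 0 := by exact_mod_cast hMpos.ne'
  have ha0 : (∏ i, (a i : ℚ)) ≠ 0 := prod_ne_zero_iff.2 fun i _ => by exact_mod_cast (ha i).ne'
  have hd0 : (d.factorial : ℚ) ≠ 0 := by positivity
  refine ⟨fun i => Q.coeff (d - i) / (M : ℚ) ^ (d - i), ?_, ?_, ?_⟩
  · have hQd : Q.coeff d = R.card * (1 / (d.factorial : ℚ)) := by
      simp only [Q, finsetSum_coeff, shiftedChoose_coeff, sum_const, nsmul_eq_mul]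
    have hcard : (∏ i, (a i : ℚ)) * R.card = (M : ℚ) ^ d := by
      apply mul_left_cancel₀ hM0
      rw [mul_left_comm, hR, hprod, pow_succ']
    simp only [Nat.sub_zero]
    rw [hQd, ← hcard]
    have hR0 : (R.card : ℚ) ≠ 0 := by
      intro h
      rw [h, mul_zero] at hcard
      exact pow_ne_zero d hM0 hcard.symm
    field_simp
  · have h0 : P 0 = 1 := by
      rw [hP, Nat.card_eq_one_iff_exists]
      refine ⟨⟨0, by simp⟩, fun x => Subtype.ext (funext fun i => ?_)⟩
      have hx : ∑ i, a i * x.1 i = 0 := by exact_mod_cast x.2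
      have := (sum_eq_zero_iff.1 hx) i (mem_univ i)
      simpa [(ha i).ne'] using this
    have := hPQ 0
    simp only [mul_zero, Nat.cast_zero, h0, Nat.cast_one] at this
    simp only [Nat.sub_self, pow_zero, div_one]
    rw [coeff_zero_eq_eval_zero, ← this]
  · rintro b ⟨k, rfl⟩
    rw [hPQ, eval_eq_sum_range' hQdeg, ← sum_range_reflect]
    refine sum_congr rfl fun i _ => ?_
    rw [show d + 1 - 1 - i = d - i by omega]
    push_cast
    rw [mul_pow]
    field_simp
end

section
/- Let n ≥ 2, let a₁,...,aₙ be positive integers, and let b be a nonnegative integer. For each integer k ≥ 1 set l'_k = ∑_{S ⊆ {1,...,n}} (−1)^{|S|} · C̄(n − 1 + k − ∑_{i∈S} aᵢ, n − 1), where C̄(a, m) denotes the binomial coefficient C(a, m) when a ≥ m and 0 otherwise (including when a < 0). Then the recurrence P(b) = C(b + n − 1, n − 1) − ∑_{k=1}^{a₁+a₂+⋯+aₙ−n} l'_k · P(b − k) holds. -/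
/-!
The proof is a comparison of coefficients in `ℤ⟦X⟧`. The generating function of `P` is
`F = ∏ i, 1 / (1 - X ^ a i)`, and
`Q = ∏ i, (1 + X + ⋯ + X ^ (a i - 1)) = (∏ i, (1 - X ^ a i)) / (1 - X) ^ n`
is a polynomial with constant term `1` and degree at most `∑ i, a i - n`. Expanding
`∏ i, (1 - X ^ a i)` over subsets of the index set and using
`(1 - X) ^ (-n) = ∑ m, C(n - 1 + m, n - 1) X ^ m` shows that the `k`-th coefficient `q k` of `Q` is
`l' k` for `k ≥ 1` (`coeff_geomProd`), while `q 0 = 1`.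
Since `Q * F = (1 - X) ^ (-n)` (`geomProd_mul_denumSeries`), the coefficient of
`X ^ b` gives `∑ k ≤ b, q k * P (b - k) = C(b + n - 1, n - 1)`. Isolating the term `k = 0` is the
recurrence: the sum may be taken up to `∑ i, a i - n` instead of `b`, because `Q` has no
coefficients beyond that point and `P` vanishes at negative integers.
-/

/-- `C̄(a, m)` is the binomial coefficient `C(a, m)` when `a ≥ m` and `0` otherwise
(including when `a < 0`). -/
def Cbar (a : ℤ) (m : ℕ) : ℕ := if (m : ℤ) ≤ a then a.toNat.choose m else 0

open PowerSeries

/-- The power series `∏ i, ∑ j, X ^ (a i * j)`, written with indicator coefficients; it is the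
generating function of the number of representations `∑ i, a i * x i = c`. -/
noncomputable def denumSeries {n : ℕ} (a : Fin n → ℕ) : ℤ⟦X⟧ :=
  ∏ i, PowerSeries.mk fun m => if a i ∣ m then 1 else 0

/-- The polynomial `∏ i, (1 + X + ⋯ + X ^ (a i - 1))`. -/
noncomputable def geomProd {n : ℕ} (a : Fin n → ℕ) : Polynomial ℤ :=
  ∏ i, ∑ j ∈ Finset.range (a i), Polynomial.X ^ j

lemma coeff_denumSeries {n : ℕ} (a : Fin n → ℕ) (ha : ∀ i, 0 < a i) (c : ℕ) :
    coeff c (denumSeries a) =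
      (Nat.card {x : Fin n → ℕ // ∑ i, (a i : ℤ) * x i = (c : ℤ)} : ℤ) := by
  classical
  rw [denumSeries, PowerSeries.coeff_prod]
  have hprod : ∀ l : Fin n →₀ ℕ, (∏ i, coeff (l i)
      (PowerSeries.mk fun m => if a i ∣ m then 1 else 0 : ℤ⟦X⟧)) =
        if ∀ i, a i ∣ l i then 1 else 0 := fun l => by
    simp [Finset.prod_boole]
  rw [Finset.sum_congr rfl fun l _ => hprod l, Finset.sum_boole, ← Nat.card_eq_finsetCard]
  congr 1
  -- The exponent chosen from the `i`-th factor is `a i * x i`.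
  refine Nat.card_congr
    { toFun := fun l => ⟨fun i => l.1 i / a i, ?_⟩
      invFun := fun x => ⟨Finsupp.equivFunOnFinite.symm fun i => a i * x.1 i, ?_⟩
      left_inv := ?_
      right_inv := ?_ }
  · obtain ⟨l, hl⟩ := l
    simp only [Finset.mem_filter, Finset.mem_finsuppAntidiag] at hl
    have h : ∑ i, a i * (l i / a i) = c :=
      (Finset.sum_congr rfl fun i _ => Nat.mul_div_cancel' (hl.2 i)).trans hl.1.1
    exact_mod_cast h
  · obtain ⟨x, hx⟩ := x
    simp only [Finset.mem_filter, Finset.mem_finsuppAntidiag]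
    refine ⟨⟨?_, Finset.subset_univ _⟩, fun i => ?_⟩
    · simp only [Finsupp.coe_equivFunOnFinite_symm]
      exact_mod_cast hx
    · simp
  · rintro ⟨l, hl⟩
    simp only [Finset.mem_filter] at hl
    ext i
    simpa using Nat.mul_div_cancel' (hl.2 i)
  · rintro ⟨x, hx⟩
    ext i
    simp [ha i]

lemma one_sub_mul_indicator (m : ℕ) (hm : 0 < m) :
    (1 - X ^ m) * (PowerSeries.mk fun k => if m ∣ k then 1 else 0 : ℤ⟦X⟧) = 1 := by
  ext k
  rw [sub_mul, one_mul, map_sub, coeff_X_pow_mul', coeff_mk, coeff_mk, coeff_one]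
  by_cases h : m ≤ k
  · have hk : k ≠ 0 := by omega
    simp [h, hk, Nat.dvd_sub_iff_left h dvd_rfl]
  · rcases Nat.eq_zero_or_pos k with rfl | hk
    · simp [hm.ne']
    · simp [h, hk.ne', Nat.not_dvd_of_pos_of_lt hk (not_le.mp h)]

lemma geomProd_mul_one_sub_pow {n : ℕ} (a : Fin n → ℕ) :
    (geomProd a : ℤ⟦X⟧) * (1 - X) ^ n = ∏ i, (1 - X ^ a i) := by
  have h : geomProd a * (1 - Polynomial.X) ^ n = ∏ i, (1 - Polynomial.X ^ a i) := by
    have : (1 - Polynomial.X : Polynomial ℤ) ^ n = ∏ _i : Fin n, (1 - Polynomial.X) := by simp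
    rw [geomProd, this, ← Finset.prod_mul_distrib]
    exact Finset.prod_congr rfl fun i _ => geom_sum_mul_neg _ _
  have h' := congrArg (Polynomial.coeToPowerSeries.ringHom (R := ℤ)) h
  simpa [map_prod] using h'

lemma geomProd_eq {n : ℕ} (a : Fin n → ℕ) :
    (geomProd a : ℤ⟦X⟧) = (∏ i, (1 - X ^ a i)) * (invOneSubPow ℤ n).val := by
  rw [← geomProd_mul_one_sub_pow, mul_assoc, ← invOneSubPow_inv_eq_one_sub_pow,
    Units.inv_val, mul_one]

lemma geomProd_mul_denumSeries {n : ℕ} (a : Fin n → ℕ) (ha : ∀ i, 0 < a i) :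
    (geomProd a : ℤ⟦X⟧) * denumSeries a = (invOneSubPow ℤ n).val := by
  rw [geomProd_eq, mul_right_comm, denumSeries, ← Finset.prod_mul_distrib,
    Finset.prod_congr rfl fun i _ => one_sub_mul_indicator (a i) (ha i)]
  simp

lemma coeff_geomProd {n : ℕ} (hn : 0 < n) (a : Fin n → ℕ) (k : ℕ) :
    (geomProd a).coeff k = ∑ S : Finset (Fin n),
        (-1 : ℤ) ^ S.card * (Cbar ((n : ℤ) - 1 + k - ∑ i ∈ S, (a i : ℤ)) (n - 1) : ℤ) := by
  have hS : ∏ i, (1 - X ^ a i : ℤ⟦X⟧) =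
      ∑ S : Finset (Fin n), C ((-1 : ℤ) ^ S.card) * X ^ (∑ i ∈ S, a i) := by
    simp only [sub_eq_add_neg]
    rw [Finset.prod_one_add, Finset.powerset_univ]
    refine Finset.sum_congr rfl fun S _ => ?_
    rw [Finset.prod_neg, Finset.prod_pow_eq_pow_sum]
    simp
  rw [← Polynomial.coeff_coe, geomProd_eq, hS, Finset.sum_mul, map_sum]
  refine Finset.sum_congr rfl fun S _ => ?_
  rw [mul_assoc, coeff_C_mul, coeff_X_pow_mul',
    invOneSubPow_val_eq_mk_sub_one_add_choose_of_pos _ _ hn, coeff_mk, Cbar]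
  have hc : (∑ i ∈ S, (a i : ℤ)) = ((∑ i ∈ S, a i : ℕ) : ℤ) := by push_cast; rfl
  rw [hc]
  generalize ∑ i ∈ S, a i = s
  by_cases h : s ≤ k
  · rw [if_pos h, if_pos (by omega)]
    congr 3
    omega
  · rw [if_neg h, if_neg (by omega)]
    simp

lemma natDegree_geomProd_le {n : ℕ} (a : Fin n → ℕ) (ha : ∀ i, 0 < a i) :
    (geomProd a).natDegree ≤ (∑ i, a i) - n := by
  have h1 : (geomProd a).natDegree ≤ ∑ i, (a i - 1) := by
    refine (Polynomial.natDegree_prod_le _ _).trans (Finset.sum_le_sum fun i _ => ?_)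
    refine Polynomial.natDegree_sum_le_of_forall_le _ _ fun j hj => ?_
    have := Finset.mem_range.mp hj
    rw [Polynomial.natDegree_X_pow]
    omega
  have h2 : ∑ i, (a i - 1) + n = ∑ i, a i := by
    have : ∑ i, (a i - 1) + n = ∑ i, (a i - 1 + 1) := by simp [Finset.sum_add_distrib]
    rw [this]
    exact Finset.sum_congr rfl fun i _ => Nat.sub_add_cancel (ha i)
  omega

lemma coeff_zero_geomProd {n : ℕ} (a : Fin n → ℕ) (ha : ∀ i, 0 < a i) :
    (geomProd a).coeff 0 = 1 := by
  rw [Polynomial.coeff_zero_eq_eval_zero, geomProd, Polynomial.eval_prod]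
  refine Finset.prod_eq_one fun i _ => ?_
  simp [Polynomial.eval_finsetSum, zero_pow_eq, ha i]

/-- Corollary 4.2: with
`l'_k = ∑_{S ⊆ {1,…,n}} (−1)^{|S|} C̄(n − 1 + k − ∑_{i∈S} aᵢ, n − 1)`, the recurrence
`P(b) = C(b + n − 1, n − 1) − ∑_{k=1}^{a₁+⋯+aₙ−n} l'_k P(b − k)` holds. -/
theorem stmt_15 (n : ℕ) (hn : 2 ≤ n) (a : Fin n → ℕ)
    (ha : ∀ i, 0 < a i) (b : ℕ)
    (P : ℤ → ℕ)
    (hP : ∀ c : ℤ, P c = Nat.card {x : Fin n → ℕ // ∑ i, (a i : ℤ) * x i = c})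
    (l' : ℕ → ℤ)
    (hl' : ∀ k : ℕ, 1 ≤ k → l' k =
      ∑ S : Finset (Fin n),
        (-1 : ℤ) ^ S.card * (Cbar ((n : ℤ) - 1 + k - ∑ i ∈ S, (a i : ℤ)) (n - 1) : ℤ)) :
    (P (b : ℤ) : ℤ) =
      ((b + n - 1).choose (n - 1) : ℤ) -
        ∑ k ∈ Finset.Icc 1 ((∑ i, a i) - n), l' k * (P ((b : ℤ) - k) : ℤ) := by
  have hn0 : 0 < n := by omega
  have hneg : ∀ c : ℤ, c < 0 → P c = 0 := by
    intro c hc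
    rw [hP, Nat.card_eq_zero]
    refine Or.inl ⟨fun ⟨x, hx⟩ => ?_⟩
    have : 0 ≤ ∑ i, (a i : ℤ) * x i := Finset.sum_nonneg fun i _ => by positivity
    omega
  have hF : ∀ c : ℕ, coeff c (denumSeries a) = (P c : ℤ) := fun c => by
    rw [coeff_denumSeries a ha, hP]
  set M := (∑ i, a i) - n
  have hsum : ∑ k ∈ Finset.Icc 1 M, l' k * (P ((b : ℤ) - k) : ℤ) =
      ∑ k ∈ Finset.Icc 1 b, (geomProd a).coeff k * (P ((b : ℤ) - k) : ℤ) := by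
    have hl : ∑ k ∈ Finset.Icc 1 M, l' k * (P ((b : ℤ) - k) : ℤ) =
        ∑ k ∈ Finset.Icc 1 M, (geomProd a).coeff k * (P ((b : ℤ) - k) : ℤ) :=
      Finset.sum_congr rfl fun k hk => by
        rw [hl' k (Finset.mem_Icc.mp hk).1, coeff_geomProd hn0]
    -- Both ranges extend to `1 ≤ k ≤ max M b` by zero terms.
    have e1 := Finset.sum_subset (f := fun k : ℕ => (geomProd a).coeff k * (P ((b : ℤ) - k) : ℤ))
      (Finset.Icc_subset_Icc_right (a := 1) (le_max_left M b)) (by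
        intro k hk hk'
        rw [Finset.mem_Icc] at hk hk'
        rw [Polynomial.coeff_eq_zero_of_natDegree_lt, zero_mul]
        exact (natDegree_geomProd_le a ha).trans_lt (by omega))
    have e2 := Finset.sum_subset (f := fun k : ℕ => (geomProd a).coeff k * (P ((b : ℤ) - k) : ℤ))
      (Finset.Icc_subset_Icc_right (a := 1) (le_max_right M b)) (by
        intro k hk hk'
        rw [Finset.mem_Icc] at hk hk'
        rw [hneg _ (by omega), Nat.cast_zero, mul_zero])
    rw [hl, e1, e2]
  have key := congrArg (coeff b) (geomProd_mul_denumSeries a ha)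
  rw [invOneSubPow_val_eq_mk_sub_one_add_choose_of_pos _ _ hn0, coeff_mk, coeff_mul,
    Finset.Nat.sum_antidiagonal_eq_sum_range_succ_mk, Finset.sum_range_succ'] at key
  simp only [Polynomial.coeff_coe, coeff_zero_geomProd a ha, hF, one_mul, Nat.sub_zero] at key
  have hshift : ∑ k ∈ Finset.Icc 1 b, (geomProd a).coeff k * (P ((b : ℤ) - k) : ℤ) =
      ∑ k ∈ Finset.range b, (geomProd a).coeff (k + 1) * (P ((b - (k + 1) : ℕ) : ℤ) : ℤ) := by
    rw [← Finset.Ico_add_one_right_eq_Icc, Finset.sum_Ico_eq_sum_range]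
    refine Finset.sum_congr (by simp) fun k hk => ?_
    have hk := Finset.mem_range.mp hk
    rw [add_comm 1 k, Nat.cast_sub (by omega)]
  rw [hsum, hshift, show b + n - 1 = n - 1 + b by omega, ← key]
  ring
end
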